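/- Fix m with 3/2 < m < 2. There is a constant C < ∞ such that for every z ∈ bD_m: ∫_{bD_m} |Re w₁|^{2m−4} · |w−z|^{−2} dH³(w) ≤ C. In particular this integral is finite for every z ∈ bD_m. -/

import Mathlib

open MeasureTheory Complex
open scoped ENNReal

noncomputable section

/-- `ℂ²` with the Euclidean metric. -/
abbrev C2 := EuclideanSpace ℂ (Fin 2)

instance : MeasurableSpace C2 := borel _
instance : BorelSpace C2 := ⟨rfl⟩

/-- The defining function `ρ(w) = |w₂|² + |Re w₁|^m + (Im w₁)² − 1`. -/
def rhom (m : ℝ) (w : C2) : ℝ := ‖w 1‖ ^ 2 + |(w 0).re| ^ m + (w 0).im ^ 2 - 1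

/-- The domain `D_m = {ρ < 0}`. -/
def Dm (m : ℝ) : Set C2 := {w | rhom m w < 0}

/-- The boundary `bD_m = {ρ = 0}`. -/
def bDm (m : ℝ) : Set C2 := {w | rhom m w = 0}

/-- The Cauchy–Leray denominator
`Δ(w,z) = ((m/2)|u₁|^{m−1}·sgn(u₁) − i v₁)(w₁−z₁) + conj(w₂)(w₂−z₂)`. -/
def Deltam (m : ℝ) (w z : C2) : ℂ :=
  ((m / 2 * |(w 0).re| ^ (m - 1) * Real.sign (w 0).re : ℝ) - I * ((w 0).im : ℂ))
      * (w 0 - z 0)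
    + (starRingEnd ℂ) (w 1) * (w 1 - z 1)

/-- The real gradient `∇ρ` on `ℝ⁴ ≅ ℂ²`, written as a vector in `ℂ²`:
`∇ρ(w) = (m|u₁|^{m−1} sgn(u₁) + 2i v₁, 2w₂)`. -/
def gradRhom (m : ℝ) (w : C2) : C2 :=
  (WithLp.equiv 2 (Fin 2 → ℂ)).symm
    ![(m * |(w 0).re| ^ (m - 1) * Real.sign (w 0).re : ℝ)
        + (2 * (w 0).im : ℝ) * I, 2 * w 1]

/-- The inward unit normal `N(z) = −∇ρ(z)/|∇ρ(z)|`. -/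
def Nm (m : ℝ) (z : C2) : C2 := (-‖gradRhom m z‖⁻¹ : ℝ) • gradRhom m z

lemma lint_fin_prod : ∀ (n : ℕ) (F : Fin n → ℝ → ℝ≥0∞), (∀ j, Measurable (F j)) →
    ∫⁻ p : Fin n → ℝ, ∏ j, F j (p j) = ∏ j, ∫⁻ t, F j t := by
  intro n
  induction n with
  | zero => intro F hF; simp [volume_pi]
  | succ n ih =>
    intro F hF
    rw [← (MeasureTheory.volume_preserving_piFinSuccAbove (fun _ : Fin (n+1) => ℝ) 0).symm.lintegral_comp_emb
      (MeasurableEquiv.measurableEmbedding _), Measure.volume_eq_prod]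
    simp only [Fin.prod_univ_succ, MeasurableEquiv.piFinSuccAbove_symm_apply,
      Fin.insertNthEquiv_zero]
    have : ∀ q : ℝ × (Fin n → ℝ),
        F 0 (((Fin.insertNthEquiv (fun _ => ℝ) 0) q : Fin (n+1) → ℝ) 0) = F 0 q.1 := fun q => rfl
    simp only [Fin.consEquiv_apply, Fin.cons_zero, Fin.cons_succ]
    rw [MeasureTheory.lintegral_prod_mul (f := F 0) (g := fun p : Fin n → ℝ => ∏ j, F (Fin.succ j) (p j))]
    · rw [ih _ (fun j => hF _)]
    · exact (hF 0).aemeasurable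
    · exact (Finset.measurable_prod _ (fun j _ => (hF _).comp (measurable_pi_apply j))).aemeasurable

/-- real coordinates -/
def crd (w : C2) : Fin 4 → ℝ := ![(w 0).re, (w 0).im, (w 1).re, (w 1).im]

def prj (i : Fin 4) (w : C2) : Fin 3 → ℝ := fun j => crd w (i.succAbove j)

lemma prj_cont (i : Fin 4) : Continuous (prj i) := by
  refine continuous_pi fun j => ?_
  have h : ∀ k : Fin 4, Continuous (fun w : C2 => crd w k) := by
    intro k
    fin_cases k <;> simp [crd] <;> fun_prop
  exact h _

lemma patch (A : Set C2) (i : Fin 4) (L : NNReal)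
    (hanti : ∀ w ∈ A, ∀ w' ∈ A, ‖w - w'‖ ≤ L * ‖prj i w - prj i w'‖)
    (F : Fin 3 → ℝ → ℝ≥0∞) (hF : ∀ j, Measurable (F j)) (K : ℝ≥0∞) (f : C2 → ℝ≥0∞)
    (hf : ∀ w ∈ A, f w ≤ K * ∏ j, F j (prj i w j)) :
    ∫⁻ w in A, f w ∂μH[3] ≤ (L : ℝ≥0∞) ^ (3 : ℝ) * (K * ∏ j, ∫⁻ t, F j t) := by
  have hm : Measurable (prj i) := (prj_cont i).measurable
  have hG : Measurable (fun p : Fin 3 → ℝ => K * ∏ j, F j (p j)) :=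
    (Finset.measurable_prod _ (fun j _ => (hF _).comp (measurable_pi_apply j))).const_mul _
  have hle : Measure.map (prj i) ((μH[3] : Measure C2).restrict A) ≤
      ((L : ℝ≥0∞) ^ (3 : ℝ)) • (volume : Measure (Fin 3 → ℝ)) := by
    refine Measure.le_iff.2 fun E hE => ?_
    rw [Measure.map_apply hm hE, Measure.restrict_apply (hm hE)]
    have hinj : Set.InjOn (prj i) A := by
      intro w hw w' hw' h
      have := hanti w hw w' hw'
      rw [h, sub_self, norm_zero, mul_zero] at this
      exact sub_eq_zero.1 (norm_le_zero_iff.1 this)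
    set B := prj i ⁻¹' E ∩ A
    have hBi : Set.InjOn (prj i) B := hinj.mono Set.inter_subset_right
    have hL : LipschitzOnWith L (Function.invFunOn (prj i) B) (prj i '' B) := by
      refine LipschitzOnWith.of_dist_le_mul ?_
      rintro _ ⟨w, hw, rfl⟩ _ ⟨w', hw', rfl⟩
      rw [hBi.leftInvOn_invFunOn hw, hBi.leftInvOn_invFunOn hw', dist_eq_norm, dist_eq_norm]
      exact hanti w hw.2 w' hw'.2
    have h1 := hL.hausdorffMeasure_image_le (d := 3) (by norm_num)
    rw [hBi.invFunOn_image subset_rfl] at h1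
    have hv : (μH[3] : Measure (Fin 3 → ℝ)) = volume := by
      have := hausdorffMeasure_pi_real (ι := Fin 3)
      simpa using this
    rw [hv] at h1
    refine h1.trans ?_
    simp only [Measure.smul_apply, smul_eq_mul]
    gcongr
    rintro _ ⟨w, hw, rfl⟩
    exact hw.1
  calc ∫⁻ w in A, f w ∂μH[3] ≤ ∫⁻ w in A, K * ∏ j, F j (prj i w j) ∂μH[3] :=
        setLIntegral_mono (hG.comp hm) hf
    _ = ∫⁻ p, K * ∏ j, F j (p j) ∂(Measure.map (prj i) ((μH[3] : Measure C2).restrict A)) :=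
        (lintegral_map hG hm).symm
    _ ≤ ∫⁻ p, K * ∏ j, F j (p j) ∂(((L : ℝ≥0∞) ^ (3 : ℝ)) • (volume : Measure (Fin 3 → ℝ))) :=
        lintegral_mono' hle le_rfl
    _ = _ := by
        rw [lintegral_smul_measure, lintegral_const_mul, lint_fin_prod 3 F hF, smul_eq_mul]
        exact Finset.measurable_prod _ (fun j _ => (hF _).comp (measurable_pi_apply j))

/-- one-dimensional kernel -/
def ker1 (b β : ℝ) : ℝ → ℝ≥0∞ :=
  (Set.Icc (-1 : ℝ) 1).indicator (fun t => (ENNReal.ofReal |t - b|) ^ (-β))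

lemma ker1_meas (b β : ℝ) : Measurable (ker1 b β) := by
  unfold ker1
  refine Measurable.indicator ?_ measurableSet_Icc
  fun_prop

def cker (β : ℝ) : ℝ≥0∞ := ∫⁻ t in Set.Icc (-2 : ℝ) 2, (ENNReal.ofReal |t|) ^ (-β)

lemma ker1_int (b β : ℝ) (hb : |b| ≤ 1) : ∫⁻ t, ker1 b β t ≤ cker β := by
  have hb' := abs_le.1 hb
  unfold cker
  rw [← lintegral_indicator measurableSet_Icc, ← lintegral_sub_right_eq_self ((Set.Icc (-2 : ℝ) 2).indicator _) b]
  refine lintegral_mono fun t => ?_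
  unfold ker1
  by_cases ht : t ∈ Set.Icc (-1 : ℝ) 1
  · rw [Set.indicator_of_mem ht, Set.indicator_of_mem]
    constructor <;> linarith [ht.1, ht.2]
  · rw [Set.indicator_of_notMem ht]; exact zero_le

lemma cker_lt (β : ℝ) (hβ : β < 1) : cker β < ⊤ := by
  unfold cker
  have h0 : IntervalIntegrable (fun x : ℝ => x ^ (-β)) volume 0 2 :=
    intervalIntegral.intervalIntegrable_rpow' (by linarith)
  have h1 : ∫⁻ t in Set.Ioc (0 : ℝ) 2, (ENNReal.ofReal |t|) ^ (-β) < ⊤ := by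
    have h := ((intervalIntegrable_iff_integrableOn_Ioc_of_le (by norm_num)).1 h0).2
    refine lt_of_le_of_lt (setLIntegral_mono' measurableSet_Ioc fun t ht => ?_) h
    rw [abs_of_pos ht.1, ENNReal.ofReal_rpow_of_pos ht.1]
    exact Real.ofReal_le_enorm _
  have h2 : ∫⁻ t in Set.Ico (-2 : ℝ) 0, (ENNReal.ofReal |t|) ^ (-β) < ⊤ := by
    refine lt_of_eq_of_lt ?_ h1
    rw [← lintegral_indicator measurableSet_Ioc, ← lintegral_indicator measurableSet_Ico,
      ← lintegral_neg_eq_self]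
    refine lintegral_congr fun t => ?_
    by_cases ht : t ∈ Set.Ioc (0:ℝ) 2
    · rw [Set.indicator_of_mem ht, Set.indicator_of_mem, abs_neg]
      constructor <;> linarith [ht.1, ht.2]
    · rw [Set.indicator_of_notMem ht, Set.indicator_of_notMem]
      intro h
      exact ht ⟨by linarith [h.2], by linarith [h.1]⟩
  have h3 : ∫⁻ t in ({0} : Set ℝ), (ENNReal.ofReal |t|) ^ (-β) = 0 := by
    simp
  have hs : Set.Icc (-2 : ℝ) 2 ⊆ Set.Ico (-2 : ℝ) 0 ∪ ({0} ∪ Set.Ioc (0 : ℝ) 2) := by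
    intro t ht
    rcases lt_trichotomy t 0 with h | h | h
    · exact Or.inl ⟨ht.1, h⟩
    · exact Or.inr (Or.inl h)
    · exact Or.inr (Or.inr ⟨h, ht.2⟩)
  refine lt_of_le_of_lt (lintegral_mono_set hs) ?_
  refine lt_of_le_of_lt (lintegral_union_le _ _ _) ?_
  refine ENNReal.add_lt_top.2 ⟨h2, ?_⟩
  refine lt_of_le_of_lt (lintegral_union_le _ _ _) ?_
  rw [h3, zero_add]
  exact h1

lemma rpow_anti {x y : ℝ≥0∞} {e : ℝ} (he : 0 ≤ e) (h : x ≤ y) : y ^ (-e) ≤ x ^ (-e) := by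
  rw [ENNReal.rpow_neg, ENNReal.rpow_neg]
  exact ENNReal.inv_le_inv.2 (ENNReal.rpow_le_rpow h he)

/-- `x^{-α} y^{-ε} ≤ x^{-(α+ε)} + y^{-(α+ε)}` -/
lemma two_ker (x y : ℝ≥0∞) (hx : x ≠ ⊤) (hy : y ≠ ⊤) (a e : ℝ) (ha : 0 < a) (he : 0 < e) :
    x ^ (-a) * y ^ (-e) ≤ x ^ (-(a + e)) + y ^ (-(a + e)) := by
  have key : ∀ z : ℝ≥0∞, z ≠ ⊤ → z ^ (-(a + e)) = z ^ (-a) * z ^ (-e) := by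
    intro z hz
    rw [ENNReal.rpow_neg, ENNReal.rpow_neg, ENNReal.rpow_neg,
      ENNReal.rpow_add_of_nonneg _ _ ha.le he.le, ENNReal.mul_inv]
    · exact Or.inr (ENNReal.rpow_ne_top_of_nonneg he.le hz)
    · exact Or.inl (ENNReal.rpow_ne_top_of_nonneg ha.le hz)
  rcases le_total x y with h | h
  · refine le_trans ?_ le_self_add
    rw [key x hx]
    gcongr 1
    exact rpow_anti (by linarith) h
  · refine le_trans ?_ le_add_self
    rw [key y hy]
    gcongr 1
    exact rpow_anti (by linarith) h

lemma split3 (N x y z : ℝ≥0∞) (hN : N ≠ ⊤) (hx : x ≤ N) (hy : y ≤ N) (hz : z ≤ N)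
    (a b c : ℝ) (ha : 0 < a) (hb : 0 < b) (hc : 0 < c) (h : a + b + c = 2) :
    N ^ (-2 : ℝ) ≤ x ^ (-a) * y ^ (-b) * z ^ (-c) := by
  have e1 : N ^ (-2 : ℝ) = N ^ (-a) * N ^ (-b) * N ^ (-c) := by
    have hh : ∀ e : ℝ, 0 < e → N ^ e ≠ ⊤ := fun e he => ENNReal.rpow_ne_top_of_nonneg he.le hN
    rw [ENNReal.rpow_neg, ENNReal.rpow_neg, ENNReal.rpow_neg, ENNReal.rpow_neg,
      ← ENNReal.mul_inv (Or.inr (hh b hb)) (Or.inl (hh a ha)),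
      ← ENNReal.mul_inv (Or.inr (hh c hc)) (Or.inl (ENNReal.mul_ne_top (hh a ha) (hh b hb))),
      ← ENNReal.rpow_add_of_nonneg _ _ ha.le hb.le,
      ← ENNReal.rpow_add_of_nonneg _ _ (by linarith) hc.le, h]
  rw [e1]
  gcongr ?_ * ?_ * ?_
  · exact rpow_anti (by linarith) hx
  · exact rpow_anti (by linarith) hy
  · exact rpow_anti (by linarith) hz

lemma bern {m a b : ℝ} (hm : 1 ≤ m) (ha : 0 < a) (hb : 0 ≤ b) :
    a ^ m + m * a ^ (m - 1) * (b - a) ≤ b ^ m := by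
  have h := one_add_mul_self_le_rpow_one_add (s := b / a - 1) (by
    have : 0 ≤ b / a := by positivity
    linarith) hm
  have h2 : (1 + (b / a - 1)) ^ m = b ^ m / a ^ m := by
    rw [← Real.div_rpow hb ha.le]; congr 1; ring
  rw [h2, le_div_iff₀ (by positivity)] at h
  have h3 : a ^ m = a ^ (m - 1) * a := by
    rw [← Real.rpow_add_one ha.ne']; congr 1; ring
  refine le_trans (le_of_eq ?_) h
  rw [h3]
  field_simp

lemma pow_lip {m a b : ℝ} (hm : 1 ≤ m) (hm2 : m ≤ 2) (ha : 0 ≤ a) (hb : 0 ≤ b) (ha1 : a ≤ 1)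
    (hab : b ≤ a) : a ^ m - b ^ m ≤ 2 * (a - b) := by
  rcases ha.eq_or_lt with h | h
  · have : b = 0 := by linarith
    subst h; subst this; simp
  · have := bern hm h hb
    have h1 : a ^ (m - 1) ≤ 1 := Real.rpow_le_one ha ha1 (by linarith)
    have h2 : 0 ≤ a ^ (m - 1) := by positivity
    have h3 : m * a ^ (m - 1) ≤ 2 := by nlinarith
    nlinarith [mul_le_mul_of_nonneg_right h3 (sub_nonneg.2 hab)]

lemma pow_lip_abs {m a b : ℝ} (hm : 1 ≤ m) (hm2 : m ≤ 2) (ha1 : |a| ≤ 1) (hb1 : |b| ≤ 1) :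
    |(|a| ^ m - |b| ^ m)| ≤ 2 * |a - b| := by
  have h := abs_abs_sub_abs_le a b
  rcases le_total |b| |a| with h' | h'
  · have := pow_lip hm hm2 (abs_nonneg a) (abs_nonneg b) ha1 h'
    rw [abs_of_nonneg (sub_nonneg.2 (Real.rpow_le_rpow (abs_nonneg _) h' (by linarith)))]
    linarith [le_abs_self (|a| - |b|)]
  · have := pow_lip hm hm2 (abs_nonneg b) (abs_nonneg a) hb1 h'
    rw [abs_sub_comm,
      abs_of_nonneg (sub_nonneg.2 (Real.rpow_le_rpow (abs_nonneg _) h' (by linarith)))]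
    linarith [neg_abs_le (|a| - |b|)]

lemma pow_exp {m a b : ℝ} (hm : 1 ≤ m) (ha : 0 < a) (ha1 : a ≤ 1) (h4 : 1 / 4 ≤ a ^ m)
    (hab : a ≤ b) : b - a ≤ 4 * (b ^ m - a ^ m) := by
  have := bern hm ha (ha.le.trans hab)
  have h1 : a ^ m ≤ a ^ (m - 1) := Real.rpow_le_rpow_of_exponent_ge ha ha1 (by linarith)
  have h2 : 1 / 4 ≤ m * a ^ (m - 1) := by nlinarith
  nlinarith [mul_le_mul_of_nonneg_right h2 (sub_nonneg.2 hab)]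

def trm (m : ℝ) (i : Fin 4) (t : ℝ) : ℝ := if i = 0 then |t| ^ m else t ^ 2

lemma trm_nonneg (m : ℝ) (i : Fin 4) (t : ℝ) : 0 ≤ trm m i t := by
  unfold trm; split_ifs <;> positivity

lemma trm_sum {m : ℝ} {w : C2} (hw : w ∈ bDm m) : ∑ i, trm m i (crd w i) = 1 := by
  have h : ‖w 1‖ ^ 2 + |(w 0).re| ^ m + (w 0).im ^ 2 - 1 = 0 := hw
  rw [Complex.sq_norm, Complex.normSq_apply] at h
  simp [Fin.sum_univ_four, trm, crd]
  linarith

lemma trm_le {m : ℝ} {w : C2} (hw : w ∈ bDm m) (i : Fin 4) : trm m i (crd w i) ≤ 1 := by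
  rw [← trm_sum hw]
  exact Finset.single_le_sum (f := fun i => trm m i (crd w i))
    (fun j _ => trm_nonneg m j _) (Finset.mem_univ i)

lemma crd_le {m : ℝ} (hm : 1 ≤ m) {w : C2} (hw : w ∈ bDm m) (i : Fin 4) : |crd w i| ≤ 1 := by
  have h := trm_le hw i
  unfold trm at h
  split_ifs at h with h0
  · by_contra! hc
    have := Real.one_lt_rpow hc (by linarith : 0 < m)
    linarith
  · exact (sq_le_one_iff_abs_le_one _).1 h

lemma trm_lip {m : ℝ} (hm : 1 ≤ m) (hm2 : m ≤ 2) (i : Fin 4) {a b : ℝ} (ha : |a| ≤ 1)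
    (hb : |b| ≤ 1) : |trm m i a - trm m i b| ≤ 2 * |a - b| := by
  unfold trm
  split_ifs
  · exact pow_lip_abs hm hm2 ha hb
  · rw [sq_sub_sq, abs_mul]
    have := abs_add_le a b
    gcongr; linarith

lemma trm_exp_pos {m : ℝ} (hm : 1 ≤ m) (i : Fin 4) {a b : ℝ} (ha : 0 < a) (ha1 : a ≤ 1)
    (h4 : 1 / 4 ≤ trm m i a) (hab : a ≤ b) : |a - b| ≤ 4 * |trm m i a - trm m i b| := by
  have hb : 0 < b := by linarith
  unfold trm at *
  rw [abs_sub_comm, abs_of_nonneg (sub_nonneg.2 hab)]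
  split_ifs at h4 ⊢ with h0
  · rw [abs_of_pos ha] at *
    rw [abs_of_pos hb]
    have := pow_exp hm ha ha1 h4 hab
    linarith [neg_abs_le (a ^ m - b ^ m)]
  · have : 1 / 2 ≤ a := by nlinarith
    have : b - a ≤ 4 * (b ^ 2 - a ^ 2) := by nlinarith
    linarith [neg_abs_le (a ^ 2 - b ^ 2)]

lemma trm_neg (m : ℝ) (i : Fin 4) (a : ℝ) : trm m i (-a) = trm m i a := by
  unfold trm; simp

def sg (s : Bool) (t : ℝ) : ℝ := if s then t else -t

lemma trm_exp {m : ℝ} (hm : 1 ≤ m) (i : Fin 4) (s : Bool) {a b : ℝ} (ha : 0 < sg s a)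
    (hb : 0 < sg s b) (ha1 : |a| ≤ 1) (hb1 : |b| ≤ 1)
    (ha4 : 1 / 4 ≤ trm m i a) (hb4 : 1 / 4 ≤ trm m i b) :
    |a - b| ≤ 4 * |trm m i a - trm m i b| := by
  have key : ∀ a b : ℝ, 0 < a → 0 < b → a ≤ 1 → b ≤ 1 → 1 / 4 ≤ trm m i a → 1 / 4 ≤ trm m i b →
      |a - b| ≤ 4 * |trm m i a - trm m i b| := by
    intro a b ha hb ha1 hb1 ha4 hb4
    rcases le_total a b with h | h
    · exact trm_exp_pos hm i ha ha1 ha4 h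
    · rw [abs_sub_comm, abs_sub_comm (trm m i a)]
      exact trm_exp_pos hm i hb hb1 hb4 h
  have ha2 := abs_le.1 ha1
  have hb2 := abs_le.1 hb1
  cases s
  · simp [sg] at ha hb
    have := key (-a) (-b) (by linarith) (by linarith) (by linarith) (by linarith)
      (by rwa [trm_neg]) (by rwa [trm_neg])
    rw [trm_neg, trm_neg] at this
    rwa [show |a - b| = |(-a) - (-b)| by rw [abs_sub_comm]; congr 1; ring]
  · simp [sg] at ha hb
    exact key a b ha hb ha2.2 hb2.2 ha4 hb4

def Apt (m : ℝ) (q : Fin 4 × Bool) : Set C2 :=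
  {w | w ∈ bDm m ∧ 0 < sg q.2 (crd w q.1) ∧ 1 / 4 ≤ trm m q.1 (crd w q.1)}

lemma cover (m : ℝ) (hm : 0 < m) : bDm m ⊆ ⋃ q, Apt m q := by
  intro w hw
  have h := trm_sum hw
  have : ∃ i, 1 / 4 ≤ trm m i (crd w i) := by
    by_contra! hc
    rw [Fin.sum_univ_four] at h
    linarith [hc 0, hc 1, hc 2, hc 3]
  obtain ⟨i, hi⟩ := this
  have hne : crd w i ≠ 0 := by
    intro h0
    rw [h0] at hi
    unfold trm at hi
    split_ifs at hi
    · rw [abs_zero, Real.zero_rpow hm.ne'] at hi; linarith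
    · norm_num at hi
  rw [Set.mem_iUnion]
  rcases lt_or_gt_of_ne hne with h0 | h0
  · exact ⟨(i, false), hw, by simpa [sg] using h0, hi⟩
  · exact ⟨(i, true), hw, by simpa [sg] using h0, hi⟩

lemma norm_le_crd (w w' : C2) : ‖w - w'‖ ≤ ∑ k, |crd w k - crd w' k| := by
  have e : ‖w - w'‖ ≤ ‖w 0 - w' 0‖ + ‖w 1 - w' 1‖ := by
    rw [EuclideanSpace.norm_eq, Fin.sum_univ_two]
    refine Real.sqrt_le_iff.2 ⟨by positivity, ?_⟩
    simp only [PiLp.sub_apply]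
    nlinarith [norm_nonneg (w 0 - w' 0), norm_nonneg (w 1 - w' 1),
      mul_nonneg (norm_nonneg (w 0 - w' 0)) (norm_nonneg (w 1 - w' 1))]
  have h0 := Complex.norm_le_abs_re_add_abs_im (w 0 - w' 0)
  have h1 := Complex.norm_le_abs_re_add_abs_im (w 1 - w' 1)
  simp only [Complex.sub_re, Complex.sub_im] at h0 h1
  simp [Fin.sum_univ_four, crd]
  linarith

lemma crd_le_norm (w w' : C2) (k : Fin 4) : |crd w k - crd w' k| ≤ ‖w - w'‖ := by
  have h0 : ‖w 0 - w' 0‖ ≤ ‖w - w'‖ := PiLp.norm_apply_le (w - w') 0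
  have h1 : ‖w 1 - w' 1‖ ≤ ‖w - w'‖ := PiLp.norm_apply_le (w - w') 1
  have a0 := Complex.abs_re_le_norm (w 0 - w' 0)
  have a1 := Complex.abs_im_le_norm (w 0 - w' 0)
  have a2 := Complex.abs_re_le_norm (w 1 - w' 1)
  have a3 := Complex.abs_im_le_norm (w 1 - w' 1)
  simp only [Complex.sub_re, Complex.sub_im] at a0 a1 a2 a3
  fin_cases k <;> simp [crd] <;> linarith

lemma anti_apt {m : ℝ} (hm : 1 ≤ m) (hm2 : m ≤ 2) (q : Fin 4 × Bool) :
    ∀ w ∈ Apt m q, ∀ w' ∈ Apt m q,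
      ‖w - w'‖ ≤ ((27 : NNReal) : ℝ) * ‖prj q.1 w - prj q.1 w'‖ := by
  rintro w ⟨hw, hs, h4⟩ w' ⟨hw', hs', h4'⟩
  obtain ⟨i, s⟩ := q
  dsimp only at *
  set D := ‖prj i w - prj i w'‖ with hD
  have hj : ∀ j, |crd w (i.succAbove j) - crd w' (i.succAbove j)| ≤ D := fun j =>
    norm_le_pi_norm (prj i w - prj i w') j
  have hexp := trm_exp hm i s hs hs' (crd_le hm hw i) (crd_le hm hw' i) h4 h4'
  have hsum := trm_sum hw
  have hsum' := trm_sum hw'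
  rw [Fin.sum_univ_succAbove _ i, Fin.sum_univ_three] at hsum hsum'
  have hl : ∀ j, |trm m (i.succAbove j) (crd w (i.succAbove j)) -
      trm m (i.succAbove j) (crd w' (i.succAbove j))| ≤ 2 * D := fun j =>
    (trm_lip hm hm2 _ (crd_le hm hw _) (crd_le hm hw' _)).trans (by linarith [hj j])
  have hi : |trm m i (crd w i) - trm m i (crd w' i)| ≤ 6 * D := by
    have l0 := abs_le.1 (hl 0)
    have l1 := abs_le.1 (hl 1)
    have l2 := abs_le.1 (hl 2)
    rw [abs_le]
    constructor <;> linarith [l0.1, l0.2, l1.1, l1.2, l2.1, l2.2]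
  have hn := norm_le_crd w w'
  rw [Fin.sum_univ_succAbove _ i, Fin.sum_univ_three] at hn
  have : ((27 : NNReal) : ℝ) = 27 := by norm_num
  rw [this]
  linarith [hj 0, hj 1, hj 2]

lemma ker1_apply {b β t : ℝ} (ht : |t| ≤ 1) : ker1 b β t = (ENNReal.ofReal |t - b|) ^ (-β) := by
  unfold ker1
  rw [Set.indicator_of_mem]
  exact abs_le.1 ht

def fint (m : ℝ) (z w : C2) : ℝ≥0∞ := (ENNReal.ofReal |(w 0).re|) ^ (2 * m - 4)
            * (ENNReal.ofReal ‖w - z‖) ^ (-2 : ℝ)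

lemma apt_zero (m : ℝ) (hm1 : 3 / 2 < m) (hm2 : m < 2) (s : Bool) (z : C2) (hz : z ∈ bDm m) :
    ∫⁻ w in Apt m (0, s), fint m z w ∂μH[3] ≤
      ((27 : NNReal) : ℝ≥0∞) ^ (3 : ℝ) * ((ENNReal.ofReal (1/4)) ^ (-(4 - 2 * m)) *
        ∏ _j : Fin 3, cker (2 / 3)) := by
  have hm : 1 ≤ m := by linarith
  refine (patch (Apt m (0, s)) 0 27 (anti_apt hm hm2.le (0, s))
    (fun j => ker1 (crd z ((0 : Fin 4).succAbove j)) (2 / 3)) (fun j => ker1_meas _ _)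
    ((ENNReal.ofReal (1/4)) ^ (-(4 - 2 * m))) _ ?_).trans ?_
  · rintro w ⟨hw, _, h4⟩
    unfold fint
    refine mul_le_mul' ?_ ?_
    · rw [show 2 * m - 4 = -(4 - 2 * m) by ring]
      refine rpow_anti (by linarith) (ENNReal.ofReal_le_ofReal ?_)
      have h4' : 1 / 4 ≤ |(w 0).re| ^ m := h4
      have h1 : |(w 0).re| ≤ 1 := crd_le hm hw 0
      have h2 : |(w 0).re| ^ m ≤ |(w 0).re| ^ (1 : ℝ) := by
        rcases (abs_nonneg (w 0).re).eq_or_lt with h | h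
        · rw [← h, Real.zero_rpow (by linarith)] at h4'
          norm_num at h4'
        · exact Real.rpow_le_rpow_of_exponent_ge h h1 hm
      rw [Real.rpow_one] at h2
      linarith
    · rw [Fin.prod_univ_three]
      unfold prj
      rw [ker1_apply (crd_le hm hw _), ker1_apply (crd_le hm hw _), ker1_apply (crd_le hm hw _)]
      exact split3 _ _ _ _ ENNReal.ofReal_ne_top (ENNReal.ofReal_le_ofReal (crd_le_norm _ _ _))
        (ENNReal.ofReal_le_ofReal (crd_le_norm _ _ _))
        (ENNReal.ofReal_le_ofReal (crd_le_norm _ _ _)) _ _ _ (by norm_num) (by norm_num)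
        (by norm_num) (by norm_num)
  · gcongr with j
    exact ker1_int _ _ (crd_le hm hz _)

lemma apt_succ (m : ℝ) (hm1 : 3 / 2 < m) (hm2 : m < 2) (i : Fin 4) (hi : i ≠ 0) (s : Bool)
    (z : C2) (hz : z ∈ bDm m) :
    ∫⁻ w in Apt m (i, s), fint m z w ∂μH[3] ≤
      ((27 : NNReal) : ℝ≥0∞) ^ (3 : ℝ) * (1 * ((cker (5 / 2 - m) + cker (5 / 2 - m)) *
        cker (1 - (m - 3 / 2) / 2) * cker (1 - (m - 3 / 2) / 2))) := by
  have hm : 1 ≤ m := by linarith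
  have h00 : i.succAbove 0 = 0 := Fin.succAbove_ne_zero_zero hi
  refine (patch (Apt m (i, s)) i 27 (anti_apt hm hm2.le (i, s))
    (![fun t => ker1 0 (5 / 2 - m) t + ker1 (crd z 0) (5 / 2 - m) t,
      ker1 (crd z (i.succAbove 1)) (1 - (m - 3 / 2) / 2),
      ker1 (crd z (i.succAbove 2)) (1 - (m - 3 / 2) / 2)]) ?_ 1 _ ?_).trans ?_
  · intro j
    fin_cases j
    · exact (ker1_meas _ _).add (ker1_meas _ _)
    · exact ker1_meas _ _
    · exact ker1_meas _ _
  · rintro w ⟨hw, _, h4⟩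
    rw [one_mul, Fin.prod_univ_three]
    show _ ≤ (ker1 0 (5 / 2 - m) (crd w (i.succAbove 0)) +
        ker1 (crd z 0) (5 / 2 - m) (crd w (i.succAbove 0))) *
      ker1 (crd z (i.succAbove 1)) (1 - (m - 3 / 2) / 2) (crd w (i.succAbove 1)) *
      ker1 (crd z (i.succAbove 2)) (1 - (m - 3 / 2) / 2) (crd w (i.succAbove 2))
    rw [h00, ker1_apply (crd_le hm hw _), ker1_apply (crd_le hm hw _),
      ker1_apply (crd_le hm hw _), ker1_apply (crd_le hm hw _), sub_zero]
    have h1 := split3 (ENNReal.ofReal ‖w - z‖) _ _ _ ENNReal.ofReal_ne_top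
        (ENNReal.ofReal_le_ofReal (crd_le_norm w z 0))
        (ENNReal.ofReal_le_ofReal (crd_le_norm w z (i.succAbove 1)))
        (ENNReal.ofReal_le_ofReal (crd_le_norm w z (i.succAbove 2)))
        (m - 3 / 2) (1 - (m - 3 / 2) / 2) (1 - (m - 3 / 2) / 2)
        (by linarith) (by linarith) (by linarith) (by ring)
    have h2 := two_ker (ENNReal.ofReal |crd w 0|) (ENNReal.ofReal |crd w 0 - crd z 0|)
      ENNReal.ofReal_ne_top ENNReal.ofReal_ne_top (4 - 2 * m) (m - 3 / 2) (by linarith)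
      (by linarith)
    rw [show 4 - 2 * m + (m - 3 / 2) = 5 / 2 - m by ring] at h2
    unfold fint
    rw [show 2 * m - 4 = -(4 - 2 * m) by ring]
    refine (mul_le_mul' (le_refl _) h1).trans ?_
    rw [← mul_assoc, ← mul_assoc]
    exact mul_le_mul' (mul_le_mul' h2 le_rfl) le_rfl
  · rw [Fin.prod_univ_three]
    refine mul_le_mul' le_rfl (mul_le_mul' le_rfl (mul_le_mul' (mul_le_mul' ?_ ?_) ?_))
    · show ∫⁻ t, (ker1 0 (5 / 2 - m) t + ker1 (crd z 0) (5 / 2 - m) t) ≤ _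
      rw [lintegral_add_left (ker1_meas _ _)]
      exact add_le_add (ker1_int _ _ (by simp)) (ker1_int _ _ (crd_le hm hz _))
    · exact ker1_int _ _ (crd_le hm hz _)
    · exact ker1_int _ _ (crd_le hm hz _)

lemma main_bd (m : ℝ) (hm1 : 3 / 2 < m) (hm2 : m < 2) :
    ∃ C : ℝ≥0∞, C < ⊤ ∧ ∀ z ∈ bDm m, ∫⁻ w in bDm m, fint m z w ∂μH[3] ≤ C := by
  obtain ⟨C1, hC1, h1⟩ : ∃ C : ℝ≥0∞, C < ⊤ ∧ ∀ (q : Fin 4 × Bool), ∀ z ∈ bDm m,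
      ∫⁻ w in Apt m q, fint m z w ∂μH[3] ≤ C := by
    refine ⟨((27 : NNReal) : ℝ≥0∞) ^ (3 : ℝ) * ((ENNReal.ofReal (1/4)) ^ (-(4 - 2 * m)) *
        ∏ _j : Fin 3, cker (2 / 3)) +
      ((27 : NNReal) : ℝ≥0∞) ^ (3 : ℝ) * (1 * ((cker (5 / 2 - m) + cker (5 / 2 - m)) *
        cker (1 - (m - 3 / 2) / 2) * cker (1 - (m - 3 / 2) / 2))), ?_, fun q z hz => ?_⟩
    rotate_left
    · obtain ⟨i, s⟩ := q
      by_cases hi : i = 0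
      · subst hi
        exact (apt_zero m hm1 hm2 s z hz).trans le_self_add
      · exact (apt_succ m hm1 hm2 i hi s z hz).trans le_add_self
    · have k1 := cker_lt (2 / 3) (by norm_num)
      have k2 := cker_lt (5 / 2 - m) (by linarith)
      have k3 := cker_lt (1 - (m - 3 / 2) / 2) (by linarith)
      have k0 : ((27 : NNReal) : ℝ≥0∞) ^ (3 : ℝ) < ⊤ :=
        ENNReal.rpow_lt_top_of_nonneg (by norm_num) ENNReal.coe_ne_top
      have k4 : (ENNReal.ofReal (1/4)) ^ (-(4 - 2 * m)) < ⊤ := by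
        rw [ENNReal.ofReal_rpow_of_pos (by norm_num)]
        exact ENNReal.ofReal_lt_top
      refine ENNReal.add_lt_top.2 ⟨?_, ?_⟩
      · rw [Fin.prod_univ_three]
        exact ENNReal.mul_lt_top k0 (ENNReal.mul_lt_top k4
          (ENNReal.mul_lt_top (ENNReal.mul_lt_top k1 k1) k1))
      · exact ENNReal.mul_lt_top k0 (ENNReal.mul_lt_top ENNReal.one_lt_top
          (ENNReal.mul_lt_top (ENNReal.mul_lt_top (ENNReal.add_lt_top.2 ⟨k2, k2⟩) k3) k3))
  refine ⟨∑ _q : Fin 4 × Bool, C1, ENNReal.sum_lt_top.2 fun _ _ => hC1, fun z hz => ?_⟩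
  refine (lintegral_mono_set (cover m (by linarith))).trans ?_
  refine (lintegral_iUnion_le _ _).trans ?_
  rw [tsum_fintype]
  exact Finset.sum_le_sum fun q _ => h1 q z hz

/-- Fix `3/2 < m < 2`. There is `C < ∞` such that for every `z ∈ bD_m`:
`∫_{bD_m} |Re w₁|^{2m−4}·|w−z|^{−2} dH³(w) ≤ C`; in particular this integral is finite
for every `z ∈ bD_m` (the integrand is `+∞` where singular). -/
theorem stmt15 (m : ℝ) (hm1 : 3 / 2 < m) (hm2 : m < 2) :
    ∃ C : ℝ, ∀ z ∈ bDm m,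
      (∫⁻ w in bDm m,
          (ENNReal.ofReal |(w 0).re|) ^ (2 * m - 4)
            * (ENNReal.ofReal ‖w - z‖) ^ (-2 : ℝ) ∂μH[3])
        ≤ ENNReal.ofReal C ∧
      (∫⁻ w in bDm m,
          (ENNReal.ofReal |(w 0).re|) ^ (2 * m - 4)
            * (ENNReal.ofReal ‖w - z‖) ^ (-2 : ℝ) ∂μH[3]) < ⊤ := by
  obtain ⟨C, hC, h⟩ := main_bd m hm1 hm2
  refine ⟨C.toReal, fun z hz => ⟨?_, ?_⟩⟩
  · rw [ENNReal.ofReal_toReal hC.ne]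
    exact h z hz
  · exact (h z hz).trans_lt hC

end
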